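/- Let φ ∈ Γ₀(H) satisfy φ*(H) ⊂ [0,+∞] and (φ*)⁻¹((0,+∞)) ≠ ∅, let s: G → [−∞,+∞] be such that −s ∈ Γ₀(G) and S = s⁻¹((0,+∞)) ≠ ∅, let γ ∈ (0,+∞), and let (x,y) ∈ Ω₂. Then the unique η ∈ [0,+∞) satisfying (−s)_▽( prox_{(γ·φ*(prox_{(η/γ)⊙φ*}(x/γ)))⊙(−s)_▽} y ) + η = 0 equals 0, and prox_{γ(φ▷s)}(x,y) = ( x − γ·proj_{cl dom φ*}(x/γ), prox_{γ·φ*(proj_{cl dom φ*}(x/γ))·(−s)_▽} y ). -/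

import Mathlib

open scoped Classical

noncomputable section

/-- Effective domain of an extended-real-valued function. -/
def edom {E : Type*} (f : E → EReal) : Set E := {x | f x < ⊤}

/-- Convexity of an extended-real-valued function, via its epigraph. -/
def ConvexEpi {E : Type*} [AddCommGroup E] [Module ℝ E] (f : E → EReal) : Prop :=
  Convex ℝ {p : E × ℝ | f p.1 ≤ (p.2 : EReal)}

/-- `f ∈ Γ₀(E)`: proper, lower semicontinuous, convex, with values in `(-∞, +∞]`. -/
def IsGamma0 {E : Type*} [AddCommGroup E] [Module ℝ E] [TopologicalSpace E]
    (f : E → EReal) : Prop :=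
  (∃ x, f x ≠ ⊤) ∧ (∀ x, f x ≠ ⊥) ∧ LowerSemicontinuous f ∧ ConvexEpi f

/-- Proximity operator: the (unique, for `f ∈ Γ₀`) minimizer of
`y ↦ f y + ‖x - y‖² / 2`. -/
def prox {E : Type*} [NormedAddCommGroup E] [InnerProductSpace ℝ E]
    (f : E → EReal) (x : E) : E :=
  Classical.epsilon fun p =>
    ∀ y, f p + ((‖x - p‖ ^ 2 / 2 : ℝ) : EReal) ≤ f y + ((‖x - y‖ ^ 2 / 2 : ℝ) : EReal)

/-- Metric projection onto a set. -/
def projC {E : Type*} [NormedAddCommGroup E] (C : Set E) (x : E) : E :=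
  Classical.epsilon fun p => p ∈ C ∧ ∀ y ∈ C, ‖x - p‖ ≤ ‖x - y‖

/-- Fenchel conjugate. -/
def fconj {E : Type*} [NormedAddCommGroup E] [InnerProductSpace ℝ E]
    (f : E → EReal) (y : E) : EReal :=
  ⨆ x, ((inner ℝ x y : ℝ) : EReal) - f x

/-- Plain scalar multiple `ξ·f`. -/
def smulE {E : Type*} (ξ : ℝ) (f : E → EReal) : E → EReal := fun x => (ξ : EReal) * f x

/-- The operation `ξ ⊙ f`: indicator of `cl (dom f)` if `ξ = 0`, and `ξ·f` if `ξ > 0`. -/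
def rscale {E : Type*} [TopologicalSpace E] (ξ : ℝ) (f : E → EReal) : E → EReal :=
  if ξ = 0 then fun x => if x ∈ closure (edom f) then (0 : EReal) else ⊤
  else fun x => (ξ : EReal) * f x

/-- `f^∨`: agrees with `f` where `-∞ < f < 0`, and is `+∞` elsewhere. -/
def pbas {E : Type*} (f : E → EReal) : E → EReal :=
  fun x => if ⊥ < f x ∧ f x < 0 then f x else ⊤

/-- `f^∧`: agrees with `f` where `0 < f < +∞`, and is `+∞` elsewhere. -/
def phaut {E : Type*} (f : E → EReal) : E → EReal :=
  fun x => if 0 < f x ∧ f x < ⊤ then f x else ⊤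

/-- `f_▽ = (f^∨)**`. -/
def basEnv {E : Type*} [NormedAddCommGroup E] [InnerProductSpace ℝ E]
    (f : E → EReal) : E → EReal :=
  fconj (fconj (pbas f))

/-- `f_▲ = (f^∧)**`. -/
def hautEnv {E : Type*} [NormedAddCommGroup E] [InnerProductSpace ℝ E]
    (f : E → EReal) : E → EReal :=
  fconj (fconj (phaut f))

/-- `S = s⁻¹((0, +∞))`. -/
def sdom {G : Type*} (s : G → EReal) : Set G := {v | 0 < s v ∧ s v < ⊤}

/-- The preperspective `φ ⋉ s`, on the Hilbert direct sum `H ⊕ G`. -/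
def prePersp {H G : Type*} [NormedAddCommGroup H] [InnerProductSpace ℝ H]
    [NormedAddCommGroup G] [InnerProductSpace ℝ G]
    (φ : H → EReal) (s : G → EReal) : WithLp 2 (H × G) → EReal := fun q =>
  if 0 < s ((WithLp.equiv 2 (H × G)) q).2 ∧ s ((WithLp.equiv 2 (H × G)) q).2 < ⊤ then
    s ((WithLp.equiv 2 (H × G)) q).2 *
      φ ((s ((WithLp.equiv 2 (H × G)) q).2).toReal⁻¹ • ((WithLp.equiv 2 (H × G)) q).1)
  else ⊤

/-- The perspective `φ ▷ s`: the largest lower semicontinuous convex minorant of the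
preperspective `φ ⋉ s`, on the Hilbert direct sum `H ⊕ G`. -/
def persp {H G : Type*} [NormedAddCommGroup H] [InnerProductSpace ℝ H]
    [NormedAddCommGroup G] [InnerProductSpace ℝ G]
    (φ : H → EReal) (s : G → EReal) : WithLp 2 (H × G) → EReal := fun q =>
  sSup {t : EReal | ∃ g : WithLp 2 (H × G) → EReal,
    LowerSemicontinuous g ∧ ConvexEpi g ∧ (∀ r, g r ≤ prePersp φ s r) ∧ t = g q}

/-- The point `(x, y)` in the Hilbert direct sum `H ⊕ G`. -/
def pairHG {H G : Type*} (x : H) (y : G) : WithLp 2 (H × G) :=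
  (WithLp.equiv 2 (H × G)).symm (x, y)

end
noncomputable section

/-- `Ω₁` of Proposition 4.2. -/
def Omega1 {H G : Type*} [NormedAddCommGroup H] [InnerProductSpace ℝ H]
    [NormedAddCommGroup G] [InnerProductSpace ℝ G]
    (φ : H → EReal) (s : G → EReal) (γ : ℝ) : Set (H × G) :=
  {p | fconj φ (projC (closure (edom (fconj φ))) (γ⁻¹ • p.1)) = 0 ∧
       s (projC (closure (sdom s)) p.2) = 0}

/-- `Ω₂` of Proposition 4.2. -/
def Omega2 {H G : Type*} [NormedAddCommGroup H] [InnerProductSpace ℝ H]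
    [NormedAddCommGroup G] [InnerProductSpace ℝ G]
    (φ : H → EReal) (s : G → EReal) (γ : ℝ) : Set (H × G) :=
  {p | (0 < fconj φ (projC (closure (edom (fconj φ))) (γ⁻¹ • p.1)) ∧
        fconj φ (projC (closure (edom (fconj φ))) (γ⁻¹ • p.1)) < ⊤) ∧
       s (prox (smulE (γ * (fconj φ (projC (closure (edom (fconj φ))) (γ⁻¹ • p.1))).toReal)
            (basEnv fun v => -(s v))) p.2) = 0}

/-- `Ω₃` of Proposition 4.2. -/
def Omega3 {H G : Type*} [NormedAddCommGroup H] [InnerProductSpace ℝ H]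
    [NormedAddCommGroup G] [InnerProductSpace ℝ G]
    (φ : H → EReal) (s : G → EReal) (γ : ℝ) : Set (H × G) :=
  {p | fconj φ (prox (smulE ((s (projC (closure (sdom s)) p.2)).toReal / γ) (fconj φ))
          (γ⁻¹ • p.1)) = 0 ∧
       0 < s (projC (closure (sdom s)) p.2) ∧ s (projC (closure (sdom s)) p.2) < ⊤}

/-- The equation (4.2) for `η` in Theorem 4.1(i). -/
def eta7eq {H G : Type*} [NormedAddCommGroup H] [InnerProductSpace ℝ H]
    [NormedAddCommGroup G] [InnerProductSpace ℝ G]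
    (φ : H → EReal) (s : G → EReal) (γ : ℝ) (x : H) (y : G) (η : ℝ) : Prop :=
  basEnv (fun v => -(s v))
      (prox (rscale (γ * (fconj φ (prox (rscale (η / γ) (fconj φ)) (γ⁻¹ • x))).toReal)
        (basEnv fun v => -(s v))) y) + (η : EReal) = 0

end


section aux
variable {E : Type*} [NormedAddCommGroup E] [InnerProductSpace ℝ E]

/-- Working version of `IsGamma0` through the real epigraph. -/
def RG (f : E → EReal) : Prop :=
  (∃ x, f x ≠ ⊤) ∧ (∀ x, f x ≠ ⊥) ∧ IsClosed {p : E × ℝ | f p.1 ≤ (p.2 : EReal)} ∧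
    Convex ℝ {p : E × ℝ | f p.1 ≤ (p.2 : EReal)}

theorem lsc_closed {X : Type*} [TopologicalSpace X] {f : X → EReal} (h : LowerSemicontinuous f) :
    IsClosed {p : X × ℝ | f p.1 ≤ (p.2 : EReal)} := by
  have h1 := h.isClosed_epigraph
  have hc : Continuous (fun p : X × ℝ => (p.1, (p.2 : EReal))) :=
    continuous_fst.prodMk (continuous_coe_real_ereal.comp continuous_snd)
  exact h1.preimage hc

theorem IsGamma0.rg {f : E → EReal} (h : IsGamma0 f) : RG f :=
  ⟨h.1, h.2.1, lsc_closed h.2.2.1, h.2.2.2⟩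

theorem ereal_real {a : EReal} (h : a ≠ ⊤) (h' : a ≠ ⊥) : ∃ r : ℝ, a = (r : EReal) :=
  ⟨a.toReal, (EReal.coe_toReal h h').symm⟩

theorem sub_le_real (a c : ℝ) (b : EReal) :
    (a : EReal) - b ≤ (c : EReal) ↔ ((a - c : ℝ) : EReal) ≤ b := by
  induction b using EReal.rec with
  | bot => simp [-EReal.coe_sub]
  | top => simp
  | coe b => norm_cast; constructor <;> intro h <;> linarith

theorem fconj_le_iff (f : E → EReal) (y : E) (c : ℝ) :
    fconj f y ≤ (c : EReal) ↔ ∀ x, ((inner ℝ x y - c : ℝ) : EReal) ≤ f x := by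
  unfold fconj
  rw [iSup_le_iff]
  exact forall_congr' fun x => sub_le_real _ _ _

theorem le_fconj (f : E → EReal) (x y : E) (r : ℝ) (h : f x ≤ (r : EReal)) :
    ((inner ℝ x y - r : ℝ) : EReal) ≤ fconj f y := by
  by_cases ht : fconj f y = ⊤
  · rw [ht]; exact le_top
  · by_contra hlt
    push Not at hlt
    obtain ⟨c, hc1, hc2⟩ := EReal.lt_iff_exists_real_btwn.1 hlt
    have := ((fconj_le_iff f y c).1 hc1.le x).trans h
    norm_cast at this hc2
    linarith

theorem fconj_ne_bot {f : E → EReal} {x : E} {r : ℝ} (h : f x ≤ (r : EReal)) (y : E) :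
    fconj f y ≠ ⊥ := by
  intro hb
  have := le_fconj f x y r h
  rw [hb] at this
  exact EReal.coe_ne_bot _ (le_bot_iff.1 this)

theorem fconj_rg {f : E → EReal} {x : E} {r : ℝ} (h : f x ≤ (r : EReal))
    (hp : ∃ y, fconj f y ≠ ⊤) : RG (fconj f) := by
  refine ⟨hp, fconj_ne_bot h, ?_, ?_⟩
  · have : {p : E × ℝ | fconj f p.1 ≤ (p.2 : EReal)} =
        ⋂ x, {p : E × ℝ | ((inner ℝ x p.1 - p.2 : ℝ) : EReal) ≤ f x} := by
      ext p; simp only [Set.mem_ofPred_eq, Set.mem_iInter]; exact fconj_le_iff _ _ _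
    rw [this]
    refine isClosed_iInter fun x => ?_
    refine isClosed_le (continuous_coe_real_ereal.comp ?_) continuous_const
    fun_prop
  · intro p hp q hq a b ha hb hab
    simp only [Set.mem_ofPred_eq] at *
    rw [fconj_le_iff] at *
    intro z
    have h1 := hp z
    have h2 := hq z
    by_cases ht : f z = ⊤
    · rw [ht]; exact le_top
    have hnb : f z ≠ ⊥ := by
      intro hb; rw [hb] at h1; exact EReal.coe_ne_bot _ (le_bot_iff.1 h1)
    obtain ⟨c, hc⟩ := ereal_real ht hnb
    rw [hc] at h1 h2 ⊢
    norm_cast at h1 h2 ⊢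
    simp only [Prod.fst_add, Prod.smul_fst, Prod.snd_add, Prod.smul_snd, inner_add_right,
      inner_smul_right, smul_eq_mul]
    have hc' : c = a * c + b * c := by rw [← add_mul, hab, one_mul]
    nlinarith [mul_le_mul_of_nonneg_left h1 ha, mul_le_mul_of_nonneg_left h2 hb]

theorem mul_le_real {β : ℝ} (hβ : 0 < β) (a : EReal) (t : ℝ) :
    (β : EReal) * a ≤ (t : EReal) ↔ a ≤ ((t / β : ℝ) : EReal) := by
  induction a using EReal.rec with
  | bot => simp [EReal.coe_mul_bot_of_pos hβ]
  | top => simp [EReal.coe_mul_top_of_pos hβ]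
  | coe b => norm_cast; rw [le_div_iff₀ hβ, mul_comm]

theorem RG.smulE {f : E → EReal} (h : RG f) {β : ℝ} (hβ : 0 < β) : RG (smulE β f) := by
  obtain ⟨⟨x, hx⟩, h2, h3, h4⟩ := h
  obtain ⟨r, hr⟩ := ereal_real hx (h2 x)
  have key : {p : E × ℝ | _root_.smulE β f p.1 ≤ (p.2 : EReal)} =
      (fun p : E × ℝ => (p.1, p.2 / β)) ⁻¹' {p : E × ℝ | f p.1 ≤ (p.2 : EReal)} := by
    ext p; simp only [Set.mem_ofPred_eq, Set.mem_preimage]; exact mul_le_real hβ _ _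
  refine ⟨⟨x, ?_⟩, fun z => ?_, ?_, ?_⟩
  · unfold _root_.smulE; rw [hr]; exact_mod_cast EReal.coe_ne_top (β * r)
  · unfold _root_.smulE
    have := h2 z
    generalize f z = a at this
    induction a using EReal.rec with
    | bot => simp at this
    | top => simp [EReal.coe_mul_top_of_pos hβ]
    | coe b => exact_mod_cast EReal.coe_ne_bot (β * b)
  · rw [key]; exact h3.preimage (by fun_prop)
  · rw [key]
    intro p hp q hq a b ha hb hab
    have := h4 hp hq ha hb hab
    simp only [Set.mem_ofPred_eq, Set.mem_preimage] at this ⊢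
    convert this using 2
    · rfl
    congr 1
    change (a * p.2 + b * q.2) / β = a * (p.2 / β) + b * (q.2 / β)
    ring

theorem RG.minorant_aux {f : E → EReal} (h : RG f) (x : E) (r : ℝ)
    (hr : (r : EReal) < f x) [CompleteSpace E] :
    ∃ (u : E) (k b : ℝ), 0 ≤ k ∧ inner ℝ u x + k * r < b ∧
      ∀ z t, f z ≤ ((t : ℝ) : EReal) → b < inner ℝ u z + k * t := by
  obtain ⟨⟨x0, hx0⟩, h2, h3, h4⟩ := h
  obtain ⟨r0, hr0⟩ := ereal_real hx0 (h2 x0)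
  obtain ⟨F, b, h5, h6⟩ := geometric_hahn_banach_point_closed (x := (x, r)) h4 h3 (by
    simpa using hr)
  let u := (InnerProductSpace.toDual ℝ E).symm (F.comp (ContinuousLinearMap.inl ℝ E ℝ))
  let k := F (0, 1)
  have hF : ∀ z t, F (z, t) = inner ℝ u z + k * t := by
    intro z t
    have e : (z, t) = (z, (0:ℝ)) + t • ((0 : E), (1:ℝ)) := by simp
    rw [e, map_add, map_smul]
    simp [u, k, mul_comm]
  rw [hF] at h5
  have h7 : ∀ z t, f z ≤ ((t : ℝ) : EReal) → b < inner ℝ u z + k * t := by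
    intro z t hz
    rw [← hF]; exact h6 (z, t) hz
  refine ⟨u, k, b, ?_, h5, h7⟩
  by_contra hk
  push Not at hk
  let t := max r0 ((b - inner ℝ u x0) / k)
  have h8 := h7 x0 t (by rw [hr0]; exact_mod_cast le_max_left _ _)
  have h9 : (b - inner ℝ u x0) / k ≤ t := le_max_right _ _
  rw [div_le_iff_of_neg hk] at h9
  linarith

theorem RG.minorant_of_pos {f : E → EReal} (h : RG f) {u x : E} {k b r : ℝ} (hk : 0 < k)
    (h5 : inner ℝ u x + k * r < b)
    (h7 : ∀ z t, f z ≤ ((t : ℝ) : EReal) → b < inner ℝ u z + k * t) :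
    ∃ (v : E) (c : ℝ), (∀ z, ((inner ℝ z v + c : ℝ) : EReal) ≤ f z) ∧ r < inner ℝ x v + c := by
  refine ⟨-(k⁻¹ • u), b / k, fun z => ?_, ?_⟩
  · by_cases ht : f z = ⊤
    · rw [ht]; exact le_top
    obtain ⟨t, ht⟩ := ereal_real ht (h.2.1 z)
    have := h7 z t ht.le
    rw [ht]
    norm_cast
    rw [inner_neg_right, inner_smul_right, real_inner_comm]
    rw [← sub_nonneg]
    have e : t - (-(k⁻¹ * inner ℝ u z) + b / k) = (inner ℝ u z + k * t - b) / k := by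
      field_simp; ring
    rw [e]
    exact div_nonneg (by linarith) hk.le
  · rw [inner_neg_right, inner_smul_right, real_inner_comm]
    rw [← sub_pos]
    have e : (-(k⁻¹ * inner ℝ u x) + b / k) - r = (b - (inner ℝ u x + k * r)) / k := by
      field_simp
      ring
    rw [e]
    exact div_pos (by linarith) hk

theorem RG.minorant {f : E → EReal} (h : RG f) (x : E) (r : ℝ)
    (hr : (r : EReal) < f x) [CompleteSpace E] :
    ∃ (v : E) (c : ℝ), (∀ z, ((inner ℝ z v + c : ℝ) : EReal) ≤ f z) ∧ r < inner ℝ x v + c := by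
  obtain ⟨u, k, b, hk, h5, h7⟩ := h.minorant_aux x r hr
  rcases hk.lt_or_eq with hk | hk
  · exact h.minorant_of_pos hk h5 h7
  subst hk
  simp only [zero_mul, add_zero] at h5 h7
  obtain ⟨x0, hx0⟩ := h.1
  obtain ⟨r0, hr0⟩ := ereal_real hx0 (h.2.1 x0)
  obtain ⟨u', k', b', hk', h5', h7'⟩ := h.minorant_aux x0 (r0 - 1) (by
    rw [hr0]; norm_cast; linarith)
  have hk'' : 0 < k' := by
    have := h7' x0 r0 hr0.le
    nlinarith
  obtain ⟨v, c, hv, -⟩ := h.minorant_of_pos hk'' h5' h7'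
  have hd : 0 < b - inner ℝ u x := by linarith
  obtain ⟨n, hn⟩ := exists_nat_gt ((r - (inner ℝ x v + c)) / (b - inner ℝ u x))
  rw [div_lt_iff₀ hd] at hn
  refine ⟨v - (n : ℝ) • u, c + n * b, fun z => ?_, ?_⟩
  · by_cases ht : f z = ⊤
    · rw [ht]; exact le_top
    obtain ⟨t, ht⟩ := ereal_real ht (h.2.1 z)
    have h8 := h7 z t ht.le
    have h9 := hv z
    rw [ht] at h9 ⊢
    rw [EReal.coe_le_coe_iff] at h9 ⊢
    rw [inner_sub_right, inner_smul_right, real_inner_comm u z]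
    have : (0:ℝ) ≤ n * (inner ℝ u z - b) := mul_nonneg (Nat.cast_nonneg n) (by linarith)
    linarith
  · rw [inner_sub_right, inner_smul_right, real_inner_comm u x]
    linarith

theorem le_of_real_lt {a b : EReal} (h : ∀ r : ℝ, (r : EReal) < a → (r : EReal) ≤ b) : a ≤ b := by
  by_contra hlt
  push Not at hlt
  obtain ⟨c, hc1, hc2⟩ := EReal.lt_iff_exists_real_btwn.1 hlt
  exact absurd (h c hc2) (not_le.2 hc1)

theorem le_pbas (f : E → EReal) (z : E) : f z ≤ pbas f z := by
  unfold pbas; split_ifs <;> simp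

theorem le_basEnv [CompleteSpace E] {f : E → EReal} (h : RG f) (x : E) : f x ≤ basEnv f x := by
  refine le_of_real_lt fun r hr => ?_
  obtain ⟨v, c, hv, hx⟩ := h.minorant x r hr
  have h1 : fconj (pbas f) v ≤ ((-c : ℝ) : EReal) := by
    rw [fconj_le_iff]
    intro z
    rw [sub_neg_eq_add]
    exact (hv z).trans (le_pbas f z)
  have h2 := le_fconj (fconj (pbas f)) v x (-c) h1
  refine le_trans ?_ h2
  norm_cast
  rw [real_inner_comm]; linarith

theorem fconj_fconj_le (f : E → EReal) (x : E) (r : ℝ) (h : f x ≤ (r : EReal)) :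
    fconj (fconj f) x ≤ (r : EReal) := by
  rw [fconj_le_iff]
  intro u
  rw [real_inner_comm]
  exact le_fconj f x u r h

theorem basEnv_le {f : E → EReal} {x : E} {r : ℝ} (h : f x = (r : EReal)) (hr : r < 0) :
    basEnv f x ≤ (r : EReal) := by
  apply fconj_fconj_le
  unfold pbas
  rw [if_pos]
  · exact h.le
  · rw [h]; exact ⟨EReal.bot_lt_coe r, by exact_mod_cast hr⟩

theorem prox_exists [CompleteSpace E] {f : E → EReal} (h : RG f) (x : E) :
    ∃ p, ∀ y, f p + ((‖x - p‖ ^ 2 / 2 : ℝ) : EReal) ≤ f y + ((‖x - y‖ ^ 2 / 2 : ℝ) : EReal) := by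
  obtain ⟨x0, hx0⟩ := h.1
  obtain ⟨r0, hr0⟩ := ereal_real hx0 (h.2.1 x0)
  obtain ⟨u, c, hu, -⟩ := h.minorant x0 (r0 - 1) (by rw [hr0]; norm_cast; linarith)
  let J : E × ℝ → ℝ := fun p => p.2 + ‖x - p.1‖ ^ 2 / 2
  let A : Set (E × ℝ) := {p : E × ℝ | f p.1 ≤ (p.2 : EReal)}
  have hA0 : (x0, r0) ∈ A := hr0.le
  have hbd : BddBelow (J '' A) := by
    refine ⟨inner ℝ x u - ‖u‖ ^ 2 / 2 + c, ?_⟩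
    rintro _ ⟨⟨z, t⟩, hz, rfl⟩
    have h1 := (hu z).trans hz
    norm_cast at h1
    have h2 := sq_nonneg ‖x - z - u‖
    rw [norm_sub_sq_real, inner_sub_left] at h2
    simp only [J]
    linarith
  let m := sInf (J '' A)
  have hm : ∀ p ∈ A, m ≤ J p := fun p hp => csInf_le hbd ⟨p, hp, rfl⟩
  have hseq : ∀ n : ℕ, ∃ p ∈ A, J p < m + 1 / ((n : ℝ) + 1) := by
    intro n
    obtain ⟨_, ⟨p, hp, rfl⟩, h2⟩ := exists_lt_of_csInf_lt (s := J '' A) ⟨_, _, hA0, rfl⟩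
      (show sInf (J '' A) < m + 1 / ((n : ℝ) + 1) from lt_add_of_pos_right _ (by positivity))
    exact ⟨p, hp, h2⟩
  choose p hpA hpJ using hseq
  have hdist : ∀ n k, ‖(p n).1 - (p k).1‖ ^ 2 ≤ 4 * (1 / ((n : ℝ) + 1) + 1 / ((k : ℝ) + 1)) := by
    intro n k
    have h1 := hm _ (h.2.2.2 (hpA n) (hpA k) (by norm_num : (0:ℝ) ≤ 1/2)
      (by norm_num : (0:ℝ) ≤ 1/2) (by norm_num))
    have h2 := hpJ n
    have h3 := hpJ k
    have h4 := parallelogram_law_with_norm ℝ (x - (p n).1) (x - (p k).1)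
    have e1 : x - (p n).1 - (x - (p k).1) = -((p n).1 - (p k).1) := by abel
    have e2 : x - (((1:ℝ)/2) • p n + ((1:ℝ)/2) • p k).1 =
        ((1:ℝ)/2) • (x - (p n).1 + (x - (p k).1)) := by
      simp only [Prod.fst_add, Prod.smul_fst]
      module
    rw [e1, norm_neg] at h4
    simp only [J] at h1 h2 h3
    rw [e2, norm_smul] at h1
    simp only [Prod.snd_add, Prod.smul_snd, smul_eq_mul, mul_pow] at h1
    norm_num at h1
    simp only [one_div] at *
    nlinarith
  have htend : Filter.Tendsto (fun n : ℕ => 1 / ((n : ℝ) + 1)) Filter.atTop (nhds 0) :=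
    tendsto_one_div_add_atTop_nhds_zero_nat
  have hcau : CauchySeq (fun n => (p n).1) := by
    rw [Metric.cauchySeq_iff]
    intro ε hε
    have : ∀ᶠ n : ℕ in Filter.atTop, 1 / ((n : ℝ) + 1) < ε ^ 2 / 8 :=
      htend.eventually_lt_const (by positivity)
    obtain ⟨N, hN⟩ := Filter.eventually_atTop.1 this
    refine ⟨N, fun n hn k hk => ?_⟩
    rw [dist_eq_norm]
    have h1 := hdist n k
    have h2 := hN n hn
    have h3 := hN k hk
    exact lt_of_pow_lt_pow_left₀ 2 hε.le (by linarith)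
  obtain ⟨z, hz⟩ := cauchySeq_tendsto_of_complete hcau
  have hJ : Filter.Tendsto (fun n => J (p n)) Filter.atTop (nhds m) := by
    refine tendsto_of_tendsto_of_tendsto_of_le_of_le tendsto_const_nhds
      (by simpa using htend.const_add m) (fun n => hm _ (hpA n)) (fun n => (hpJ n).le)
  have ht : Filter.Tendsto (fun n => (p n).2) Filter.atTop (nhds (m - ‖x - z‖ ^ 2 / 2)) := by
    have : (fun n => (p n).2) = fun n => J (p n) - ‖x - (p n).1‖ ^ 2 / 2 := by
      funext n; simp [J]
    rw [this]
    exact hJ.sub ((((tendsto_const_nhds.sub hz).norm).pow 2).div_const 2)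
  have hzA : (z, m - ‖x - z‖ ^ 2 / 2) ∈ A :=
    h.2.2.1.mem_of_tendsto (hz.prodMk_nhds ht) (Filter.Eventually.of_forall hpA)
  refine ⟨z, fun y => ?_⟩
  by_cases hy : f y = ⊤
  · rw [hy, EReal.top_add_coe]; exact le_top
  obtain ⟨t, ht⟩ := ereal_real hy (h.2.1 y)
  have h1 := hm (y, t) ht.le
  have h2 : f z ≤ ((m - ‖x - z‖ ^ 2 / 2 : ℝ) : EReal) := hzA
  refine (add_le_add_left h2 _).trans ?_
  rw [ht]
  norm_cast
  simp only [J] at h1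
  linarith

theorem prox_spec [CompleteSpace E] {f : E → EReal} (h : RG f) (x : E) (y : E) :
    f (prox f x) + ((‖x - prox f x‖ ^ 2 / 2 : ℝ) : EReal) ≤
      f y + ((‖x - y‖ ^ 2 / 2 : ℝ) : EReal) :=
  Classical.epsilon_spec (prox_exists h x) y

theorem prox_real [CompleteSpace E] {f : E → EReal} (h : RG f) (x : E) :
    ∃ r : ℝ, f (prox f x) = (r : EReal) := by
  refine ereal_real ?_ (h.2.1 _)
  obtain ⟨x0, hx0⟩ := h.1
  obtain ⟨r0, hr0⟩ := ereal_real hx0 (h.2.1 x0)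
  intro ht
  have := prox_spec h x x0
  rw [ht, hr0, EReal.top_add_coe] at this
  exact EReal.coe_ne_top (r0 + ‖x - x0‖ ^ 2 / 2) (top_le_iff.1 (by exact_mod_cast this))

theorem prox_eq {f : E → EReal} {x p : E} {r : ℝ} (hp : f p = (r : EReal))
    (h : ∀ z, ((r + inner ℝ (z - p) (x - p) : ℝ) : EReal) ≤ f z) : prox f x = p := by
  have key : ∀ z (t : ℝ), f z = t → r + ‖x - p‖ ^ 2 / 2 + ‖z - p‖ ^ 2 / 2 ≤
      t + ‖x - z‖ ^ 2 / 2 := by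
    intro z t ht
    have h1 := h z
    rw [ht] at h1
    norm_cast at h1
    have e : x - z = (x - p) - (z - p) := by abel
    rw [e, norm_sub_sq_real (x - p) (z - p), real_inner_comm]
    linarith
  have hnb : ∀ z, f z ≠ ⊥ := by
    intro z hz
    have := h z
    rw [hz] at this
    simp at this
  have hex : ∀ y, f p + ((‖x - p‖ ^ 2 / 2 : ℝ) : EReal) ≤
      f y + ((‖x - y‖ ^ 2 / 2 : ℝ) : EReal) := by
    intro y
    by_cases hy : f y = ⊤
    · rw [hy, EReal.top_add_coe]; exact le_top
    obtain ⟨t, ht⟩ := ereal_real hy (hnb y)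
    have := key y t ht
    rw [ht, hp]
    norm_cast
    nlinarith [sq_nonneg ‖y - p‖]
  have hs : f (prox f x) + ((‖x - prox f x‖ ^ 2 / 2 : ℝ) : EReal) ≤
      f p + ((‖x - p‖ ^ 2 / 2 : ℝ) : EReal) :=
    Classical.epsilon_spec (p := fun p => ∀ y, f p + ((‖x - p‖ ^ 2 / 2 : ℝ) : EReal) ≤
      f y + ((‖x - y‖ ^ 2 / 2 : ℝ) : EReal)) ⟨p, hex⟩ p
  have hnt : f (prox f x) ≠ ⊤ := by
    intro ht
    rw [ht, hp, EReal.top_add_coe] at hs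
    exact EReal.coe_ne_top (r + ‖x - p‖ ^ 2 / 2) (top_le_iff.1 (by exact_mod_cast hs))
  obtain ⟨t, ht⟩ := ereal_real hnt (hnb _)
  have h1 := key _ t ht
  rw [ht, hp] at hs
  norm_cast at hs
  have h2 : ‖prox f x - p‖ ^ 2 ≤ 0 := by linarith
  have h3 : ‖prox f x - p‖ = 0 := by
    have := sq_nonneg ‖prox f x - p‖
    exact pow_eq_zero_iff (two_ne_zero) |>.1 (le_antisymm h2 this)
  exact sub_eq_zero.1 (norm_eq_zero.1 h3)

theorem prox_subgrad [CompleteSpace E] {f : E → EReal} (h : RG f) (x z : E) {r t : ℝ}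
    (hr : f (prox f x) = (r : EReal)) (hz : f z ≤ (t : EReal)) :
    r + inner ℝ (z - prox f x) (x - prox f x) ≤ t := by
  set p := prox f x with hp
  have key : ∀ a : ℝ, 0 < a → a ≤ 1 →
      r + inner ℝ (z - p) (x - p) ≤ t + a * (‖z - p‖ ^ 2 / 2) := by
    intro a ha ha1
    have h1 : f ((1 - a) • p + a • z) ≤ (((1 - a) * r + a * t : ℝ) : EReal) :=
      h.2.2.2 (x := (p, r)) (y := (z, t)) hr.le hz (by linarith) ha.le (by ring)
    have h2 := (prox_spec h x ((1 - a) • p + a • z)).trans (add_le_add_left h1 _)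
    rw [← hp, hr] at h2
    norm_cast at h2
    have e : x - ((1 - a) • p + a • z) = (x - p) - a • (z - p) := by module
    rw [e, norm_sub_sq_real (x - p) (a • (z - p)), inner_smul_right, norm_smul, mul_pow, Real.norm_eq_abs,
      sq_abs, real_inner_comm] at h2
    have h3 : a * (r + inner ℝ (z - p) (x - p)) ≤ a * (t + a * (‖z - p‖ ^ 2 / 2)) := by
      nlinarith
    exact le_of_mul_le_mul_left h3 ha
  have hlim : Filter.Tendsto (fun a : ℝ => t + a * (‖z - p‖ ^ 2 / 2)) (nhdsWithin 0 (Set.Ioi 0))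
      (nhds t) := by
    have : Continuous (fun a : ℝ => t + a * (‖z - p‖ ^ 2 / 2)) := by fun_prop
    have h0 := (this.tendsto 0).mono_left (nhdsWithin_le_nhds (s := Set.Ioi 0))
    simpa using h0
  refine ge_of_tendsto hlim ?_
  filter_upwards [Ioc_mem_nhdsGT (zero_lt_one)] with a ha
  exact key a ha.1 ha.2

theorem RG.closure_dom_convex {f : E → EReal} (h : RG f) : Convex ℝ (closure (edom f)) := by
  refine Convex.closure ?_
  intro p hp q hq a b ha hb hab
  obtain ⟨r, hr⟩ := ereal_real (ne_of_lt hp) (h.2.1 p)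
  obtain ⟨t, ht⟩ := ereal_real (ne_of_lt hq) (h.2.1 q)
  have := h.2.2.2 (x := (p, r)) (y := (q, t)) hr.le ht.le ha hb hab
  exact lt_of_le_of_lt this (EReal.coe_lt_top _)

theorem projC_spec [CompleteSpace E] {C : Set E} (hC : Convex ℝ C) (hcl : IsClosed C)
    (hne : C.Nonempty) (x : E) : projC C x ∈ C ∧
      (∀ y ∈ C, ‖x - projC C x‖ ≤ ‖x - y‖) ∧
      ∀ y ∈ C, inner ℝ (y - projC C x) (x - projC C x) ≤ 0 := by
  obtain ⟨v, hv, hv2⟩ := exists_norm_eq_iInf_of_complete_convex hne hcl.isComplete hC x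
  have hbdd : BddBelow (Set.range fun w : C => ‖x - w‖) := ⟨0, by rintro _ ⟨w, rfl⟩; positivity⟩
  have hex : ∃ p, p ∈ C ∧ ∀ y ∈ C, ‖x - p‖ ≤ ‖x - y‖ :=
    ⟨v, hv, fun y hy => by rw [hv2]; exact ciInf_le hbdd ⟨y, hy⟩⟩
  have hs : projC C x ∈ C ∧ ∀ y ∈ C, ‖x - projC C x‖ ≤ ‖x - y‖ := Classical.epsilon_spec hex
  refine ⟨hs.1, hs.2, ?_⟩
  have : Nonempty C := ⟨⟨v, hv⟩⟩
  have h3 : ‖x - projC C x‖ = ⨅ w : C, ‖x - w‖ :=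
    le_antisymm (le_ciInf fun w => hs.2 w w.2) (ciInf_le hbdd ⟨_, hs.1⟩)
  intro y hy
  rw [real_inner_comm]
  exact (norm_eq_iInf_iff_real_inner_le_zero hC hs.1).1 h3 y hy

theorem prox_rscale_zero [CompleteSpace E] {f : E → EReal} (h : RG f) (x : E) :
    prox (rscale 0 f) x = projC (closure (edom f)) x := by
  obtain ⟨x0, hx0⟩ := h.1
  obtain ⟨h1, -, h3⟩ := projC_spec h.closure_dom_convex isClosed_closure
    ⟨x0, subset_closure (lt_top_iff_ne_top.2 hx0 : x0 ∈ edom f)⟩ x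
  apply prox_eq (r := 0)
  · simp [rscale, h1]
  · intro z
    by_cases hz : z ∈ closure (edom f)
    · simp only [rscale, if_true, hz]
      have := h3 z hz
      rw [zero_add]
      exact_mod_cast this
    · simp [rscale, hz]

end aux

theorem ereal_mul_mono {σ : ℝ} (hσ : 0 < σ) {c : ℝ} {e : EReal} (h : (c : EReal) ≤ e) :
    ((σ * c : ℝ) : EReal) ≤ (σ : EReal) * e := by
  induction e using EReal.rec with
  | bot => exact absurd (le_bot_iff.1 h) (EReal.coe_ne_bot _)
  | top => simp [EReal.coe_mul_top_of_pos hσ]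
  | coe b =>
    norm_cast at h ⊢
    exact mul_le_mul_of_nonneg_left h hσ.le

theorem affine_le_persp {H G : Type*} [NormedAddCommGroup H] [InnerProductSpace ℝ H]
    [NormedAddCommGroup G] [InnerProductSpace ℝ G]
    (φ : H → EReal) (s : G → EReal) (R : ℝ) (z0 w : WithLp 2 (H × G))
    (h : ∀ z, ((R + inner ℝ (z - z0) w : ℝ) : EReal) ≤ prePersp φ s z) (z : WithLp 2 (H × G)) :
    ((R + inner ℝ (z - z0) w : ℝ) : EReal) ≤ persp φ s z := by
  refine le_sSup ⟨fun z => ((R + inner ℝ (z - z0) w : ℝ) : EReal), ?_, ?_, h, rfl⟩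
  · refine Continuous.lowerSemicontinuous (continuous_coe_real_ereal.comp ?_)
    fun_prop
  · intro p hp q hq a b ha hb hab
    simp only [Set.mem_ofPred_eq, EReal.coe_le_coe_iff] at *
    have e : (a • p + b • q).1 - z0 = a • (p.1 - z0) + b • (q.1 - z0) := by
      simp only [Prod.fst_add, Prod.smul_fst]
      have : z0 = a • z0 + b • z0 := by rw [← add_smul, hab, one_smul]
      nth_rewrite 1 [this]
      module
    rw [e, inner_add_left, inner_smul_left, inner_smul_left]
    simp only [Prod.snd_add, Prod.smul_snd, smul_eq_mul]
    have hR : R = a * R + b * R := by rw [← add_mul, hab, one_mul]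
    simp only [conj_trivial]
    nlinarith [mul_le_mul_of_nonneg_left hp ha, mul_le_mul_of_nonneg_left hq hb]

/-- Facts about the segment from `q` towards a point where `f < 0`. -/
theorem seg_facts {G : Type*} [NormedAddCommGroup G] [InnerProductSpace ℝ G] {f : G → EReal}
    (h : IsGamma0 f) {q b : G} (hq : f q = 0) {t : ℝ} (hb : f b = (t : EReal)) (ht : t < 0) :
    ∃ (z : ℕ → G) (τ : ℕ → ℝ), Filter.Tendsto z Filter.atTop (nhds q) ∧
      Filter.Tendsto τ Filter.atTop (nhds 0) ∧ ∀ n, f (z n) = (τ n : EReal) ∧ τ n < 0 := by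
  let c : ℕ → ℝ := fun n => 1 / ((n : ℝ) + 1)
  have hc0 : ∀ n, 0 < c n := fun n => by simp only [c]; positivity
  have hc1 : ∀ n, c n ≤ 1 := fun n => by
    simp only [c]; rw [div_le_one (by positivity)]; linarith [(Nat.cast_nonneg n : (0:ℝ) ≤ n)]
  have hc : Filter.Tendsto c Filter.atTop (nhds 0) := tendsto_one_div_add_atTop_nhds_zero_nat
  let z : ℕ → G := fun n => (1 - c n) • q + c n • b
  have hz : ∀ n, f (z n) ≤ ((c n * t : ℝ) : EReal) := by
    intro n
    have := h.2.2.2 (x := (q, 0)) (y := (b, t)) (by simp [hq]) hb.le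
      (sub_nonneg.2 (hc1 n)) (hc0 n).le (by ring)
    simpa [z] using this
  have hreal : ∀ n, ∃ r : ℝ, f (z n) = (r : EReal) := fun n =>
    ereal_real (ne_of_lt (lt_of_le_of_lt (hz n) (EReal.coe_lt_top _))) (h.2.1 _)
  choose τ hτ using hreal
  have hτ2 : ∀ n, τ n ≤ c n * t := fun n => by
    have := hz n; rw [hτ] at this; exact_mod_cast this
  have hzq : Filter.Tendsto z Filter.atTop (nhds q) := by
    have : Filter.Tendsto z Filter.atTop (nhds ((1 - (0:ℝ)) • q + (0:ℝ) • b)) :=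
      ((tendsto_const_nhds.sub hc).smul_const q).add (hc.smul_const b)
    simpa using this
  have hneg : ∀ n, τ n < 0 := fun n =>
    lt_of_le_of_lt (hτ2 n) (mul_neg_of_pos_of_neg (hc0 n) ht)
  refine ⟨z, τ, hzq, ?_, fun n => ⟨hτ n, hneg n⟩⟩
  rw [tendsto_order]
  refine ⟨fun a ha => ?_, fun a ha => Filter.Eventually.of_forall fun n => (hneg n).trans ha⟩
  have h1 := hzq.eventually (h.2.2.1 q (a : EReal) (by
    show (a : EReal) < f q
    rw [hq]; exact_mod_cast ha))
  filter_upwards [h1] with n hn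
  rw [hτ] at hn
  exact_mod_cast hn

theorem basEnv_zero {G : Type*} [NormedAddCommGroup G] [InnerProductSpace ℝ G] [CompleteSpace G]
    {f : G → EReal} (h : IsGamma0 f) (hD : RG (basEnv f)) {q b : G} (hq : f q = 0)
    {t : ℝ} (hb : f b = (t : EReal)) (ht : t < 0) : basEnv f q = 0 := by
  apply le_antisymm _ (hq ▸ le_basEnv h.rg q)
  obtain ⟨z, τ, h1, h2, h3⟩ := seg_facts h hq hb ht
  exact hD.2.2.1.mem_of_tendsto (h1.prodMk_nhds h2)
    (Filter.Eventually.of_forall fun n => basEnv_le (h3 n).1 (h3 n).2)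

theorem basEnv_rg {G : Type*} [NormedAddCommGroup G] [InnerProductSpace ℝ G] [CompleteSpace G]
    {f : G → EReal} (h : RG f) {b : G}
    {t : ℝ} (hb : f b = (t : EReal)) (ht : t < 0) : RG (basEnv f) := by
  obtain ⟨v, c, hv, -⟩ := h.minorant b (t - 1) (by rw [hb]; norm_cast; linarith)
  refine fconj_rg (x := v) (r := -c) ?_ ⟨b, ?_⟩
  · rw [fconj_le_iff]
    intro z
    rw [sub_neg_eq_add]
    exact (hv z).trans (le_pbas f z)
  · exact ne_of_lt (lt_of_le_of_lt (basEnv_le hb ht) (EReal.coe_lt_top _))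

/-- Upper bound of the perspective. -/
theorem persp_le {H G : Type*} [NormedAddCommGroup H] [InnerProductSpace ℝ H] [CompleteSpace H]
    [NormedAddCommGroup G] [InnerProductSpace ℝ G]
    {φ : H → EReal} {s : G → EReal} (hφ : RG φ) (hs : IsGamma0 (fun v : G => -(s v)))
    {q b : G} (hq : -(s q) = 0) {t : ℝ} (hb : -(s b) = (t : EReal)) (ht : t < 0) {p : H} {R : ℝ}
    (hp : ∀ u, fconj φ u < ⊤ → inner ℝ u p ≤ R) : persp φ s (pairHG p q) ≤ (R : EReal) := by
  obtain ⟨a0, ha0⟩ := hφ.1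
  obtain ⟨A, hA⟩ := ereal_real ha0 (hφ.2.1 a0)
  obtain ⟨z, τ, h1, h2, h3⟩ := seg_facts hs hq hb ht
  refine sSup_le ?_
  rintro _ ⟨g, hg1, hg2, hg3, rfl⟩
  have hbound : ∀ n, g (pairHG (p + (-τ n) • a0) (z n)) ≤ ((R + (-τ n) * A : ℝ) : EReal) := by
    intro n
    obtain ⟨h4, h5⟩ := h3 n
    have hσ : 0 < -τ n := by linarith
    have hsn : s (z n) = ((-τ n : ℝ) : EReal) := by
      rw [← neg_neg (s (z n)), h4]; simp
    refine (hg3 _).trans ?_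
    unfold prePersp pairHG
    simp only [Equiv.apply_symm_apply]
    rw [hsn, if_pos ⟨by exact_mod_cast hσ, EReal.coe_lt_top _⟩, EReal.toReal_coe,
      mul_le_real hσ]
    by_contra hlt
    push Not at hlt
    obtain ⟨v, c, hv, hx⟩ := hφ.minorant _ _ hlt
    have h6 := hp v (lt_of_le_of_lt ((fconj_le_iff φ v (-c)).2 fun z => by
      rw [sub_neg_eq_add]; exact hv z) (EReal.coe_lt_top _))
    have h7 := hv a0
    rw [hA, EReal.coe_le_coe_iff] at h7
    rw [inner_smul_left, inner_add_left, inner_smul_left, div_lt_iff₀ hσ] at hx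
    simp only [conj_trivial] at hx
    rw [real_inner_comm] at h6
    have e : ((-τ n)⁻¹ * (inner ℝ p v + -τ n * inner ℝ a0 v) + c) * -τ n =
        inner ℝ p v + (-τ n) * (inner ℝ a0 v + c) := by
      have hne : τ n ≠ 0 := h5.ne
      field_simp
      ring
    rw [e] at hx
    nlinarith [mul_le_mul_of_nonneg_left h7 hσ.le]
  have hl1 : Filter.Tendsto (fun n => pairHG (p + (-τ n) • a0) (z n)) Filter.atTop
      (nhds (pairHG p q)) := by
    have : Filter.Tendsto (fun n => (p + (-τ n) • a0, z n)) Filter.atTop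
      (nhds (p + (-(0:ℝ)) • a0, q)) :=
      (tendsto_const_nhds.add (h2.neg.smul_const a0)).prodMk_nhds h1
    rw [neg_zero, zero_smul, add_zero] at this
    exact ((WithLp.prod_continuous_toLp 2 H G).tendsto (p, q)).comp this
  have hl2 : Filter.Tendsto (fun n => R + (-τ n) * A) Filter.atTop (nhds R) := by
    simpa using (h2.neg.mul_const A).const_add R
  exact (lsc_closed hg1).mem_of_tendsto (hl1.prodMk_nhds hl2) (Filter.Eventually.of_forall hbound)

/-- Proposition 4.2(ii). -/
theorem stmt12 {H G : Type*} [NormedAddCommGroup H] [InnerProductSpace ℝ H] [CompleteSpace H]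
    [NormedAddCommGroup G] [InnerProductSpace ℝ G] [CompleteSpace G]
    (φ : H → EReal) (s : G → EReal) (hφ : IsGamma0 φ)
    (hc1 : ∀ u : H, 0 ≤ fconj φ u)
    (hc2 : ∃ u : H, 0 < fconj φ u ∧ fconj φ u < ⊤)
    (hs : IsGamma0 (fun v : G => -(s v)))
    (hS : ∃ v : G, 0 < s v ∧ s v < ⊤)
    (γ : ℝ) (hγ : 0 < γ) (x : H) (y : G) (hmem : (x, y) ∈ Omega2 φ s γ) :
    eta7eq φ s γ x y 0 ∧ (∀ η : ℝ, 0 ≤ η → eta7eq φ s γ x y η → η = 0) ∧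
    prox (smulE γ (persp φ s)) (pairHG x y) =
      pairHG (x - γ • projC (closure (edom (fconj φ))) (γ⁻¹ • x))
        (prox (smulE (γ * (fconj φ (projC (closure (edom (fconj φ))) (γ⁻¹ • x))).toReal)
          (basEnv fun v => -(s v))) y) := by
  obtain ⟨⟨hα0, hαt⟩, hsq⟩ := hmem
  simp only at hα0 hαt hsq
  have hφr := hφ.rg
  obtain ⟨a0, ha0⟩ := hφr.1
  obtain ⟨A, hA⟩ := ereal_real ha0 (hφr.2.1 a0)
  obtain ⟨b0, hb1, hb2⟩ := hS
  obtain ⟨σ0, hσ0⟩ := ereal_real hb2.ne (ne_of_gt (lt_of_le_of_lt bot_le hb1))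
  have hσpos : 0 < σ0 := by rw [hσ0] at hb1; exact_mod_cast hb1
  have hfb : -(s b0) = ((-σ0 : ℝ) : EReal) := by rw [hσ0]; simp
  have hneg : -σ0 < 0 := by linarith
  have hφs : RG (fconj φ) := fconj_rg hA.le (hc2.imp fun u hu => hu.2.ne)
  have hD : RG (basEnv fun v => -(s v)) := basEnv_rg hs.rg hfb hneg
  obtain ⟨u0, hu0, hu0'⟩ := hc2
  obtain ⟨hπ1, hπ2, hπ3⟩ := projC_spec hφs.closure_dom_convex isClosed_closure
    ⟨u0, subset_closure (hu0' : u0 ∈ edom (fconj φ))⟩ (γ⁻¹ • x)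
  set π := projC (closure (edom (fconj φ))) (γ⁻¹ • x) with hπ
  obtain ⟨α, hα⟩ := ereal_real hαt.ne (ne_of_gt (lt_of_le_of_lt bot_le hα0))
  have hαpos : 0 < α := by rw [hα] at hα0; exact_mod_cast hα0
  have hprox0 : prox (rscale 0 (fconj φ)) (γ⁻¹ • x) = π := prox_rscale_zero hφs _
  have hγα : 0 < γ * α := mul_pos hγ hαpos
  simp only [hα, EReal.toReal_coe] at hsq ⊢
  set D : G → EReal := basEnv fun v => -(s v) with hDdef
  have hDs : RG (smulE (γ * α) D) := hD.smulE hγα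
  have hrs : ∀ β : ℝ, β ≠ 0 → rscale β D = smulE β D := by
    intro β hβ; unfold rscale smulE; rw [if_neg hβ]
  set q := prox (smulE (γ * α) D) y with hq
  have hfq : -(s q) = 0 := by rw [hsq]; simp
  have hDq : D q = 0 := basEnv_zero hs hD hfq hfb hneg
  have hDq' : smulE (γ * α) D q = ((0 : ℝ) : EReal) := by unfold smulE; rw [hDq]; simp
  refine ⟨?_, ?_, ?_⟩
  · unfold eta7eq
    rw [zero_div, hprox0, hα, EReal.toReal_coe, hrs _ hγα.ne', ← hDdef, ← hq, hDq]
    simp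
  · intro η hη heq
    by_contra hne
    have hηpos : 0 < η := lt_of_le_of_ne hη (Ne.symm hne)
    unfold eta7eq at heq
    have hηγ : 0 < η / γ := div_pos hηpos hγ
    have e1 : rscale (η / γ) (fconj φ) = smulE (η / γ) (fconj φ) := by
      unfold rscale smulE; rw [if_neg hηγ.ne']
    rw [e1, ← hDdef] at heq
    have hS1 := hφs.smulE hηγ
    set π' := prox (smulE (η / γ) (fconj φ)) (γ⁻¹ • x) with hπ'
    obtain ⟨r1, hr1⟩ := prox_real hS1 (γ⁻¹ • x)
    rw [← hπ'] at hr1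
    have hlt : fconj φ π' < ⊤ :=
      lt_of_le_of_lt ((mul_le_real hηγ _ _).1 hr1.le) (EReal.coe_lt_top _)
    obtain ⟨α', hα'⟩ := ereal_real hlt.ne (hφs.2.1 π')
    have hα'0 : 0 ≤ α' := by have := hc1 π'; rw [hα'] at this; exact_mod_cast this
    have hle : α' ≤ α := by
      have h1 := prox_spec hS1 (γ⁻¹ • x) π
      rw [← hπ'] at h1
      unfold smulE at h1
      rw [hα', hα] at h1
      norm_cast at h1
      have h2 := hπ2 π' (subset_closure hlt)
      have h3 : ‖γ⁻¹ • x - π‖ ^ 2 ≤ ‖γ⁻¹ • x - π'‖ ^ 2 := by gcongr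
      have h4 : η / γ * α' ≤ η / γ * α := by linarith
      exact le_of_mul_le_mul_left h4 hηγ
    rw [hα', EReal.toReal_coe] at heq
    set q' := prox (rscale (γ * α') D) y with hq'
    have hDq1 : D q' = ((-η : ℝ) : EReal) := by
      have hnt : D q' ≠ ⊤ := by intro h; rw [h, EReal.top_add_coe] at heq; simp at heq
      obtain ⟨d, hd⟩ := ereal_real hnt (hD.2.1 q')
      rw [hd] at heq ⊢
      norm_cast at heq ⊢
      linarith
    have hmin := prox_spec hDs y q'
    rw [← hq, hDq'] at hmin
    unfold smulE at hmin
    rw [hDq1] at hmin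
    norm_cast at hmin
    rcases hα'0.lt_or_eq with hpos | hzero
    · have hβ : 0 < γ * α' := mul_pos hγ hpos
      have hmin2 := prox_spec (hD.smulE hβ) y q
      rw [← hrs _ hβ.ne', ← hq', hrs _ hβ.ne'] at hmin2
      unfold smulE at hmin2
      rw [hDq1, hDq, mul_zero] at hmin2
      norm_cast at hmin2
      have h5 : γ * α * η ≤ γ * α' * η := by linarith
      have h6 : α = α' := by
        refine le_antisymm ?_ hle
        exact le_of_mul_le_mul_left (le_of_mul_le_mul_right h5 hηpos) hγ
      have h7 : q' = q := by rw [hq', hq, ← h6, hrs _ hγα.ne']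
      rw [h7, hDq] at hDq1
      norm_cast at hDq1
      linarith
    · rw [← hzero, mul_zero] at hq'
      rw [prox_rscale_zero hD] at hq'
      have hqd : q ∈ edom D := by show D q < ⊤; rw [hDq]; exact EReal.zero_lt_top
      obtain ⟨-, h8, -⟩ := projC_spec hD.closure_dom_convex isClosed_closure
        ⟨q, subset_closure hqd⟩ y
      have h9 := h8 q (subset_closure hqd)
      rw [← hq'] at h9
      have h10 : ‖y - q'‖ ^ 2 ≤ ‖y - q‖ ^ 2 := by gcongr
      nlinarith [mul_pos hγα hηpos]
  · have hfin : ∀ z, ((inner ℝ (x - γ • π) π + inner ℝ (z - pairHG (x - γ • π) q)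
        (γ⁻¹ • (pairHG x y - pairHG (x - γ • π) q)) : ℝ) : EReal) ≤ persp φ s z := by
      apply affine_le_persp
      intro z
      unfold prePersp
      split_ifs with hz
      swap
      · exact le_top
      obtain ⟨hz1, hz2⟩ := hz
      set a := ((WithLp.equiv 2 (H × G)) z).1 with ha
      set b := ((WithLp.equiv 2 (H × G)) z).2 with hb
      obtain ⟨σ, hσ⟩ := ereal_real hz2.ne (ne_of_gt (lt_of_le_of_lt bot_le hz1))
      rw [hσ] at hz1 ⊢
      have hσp : 0 < σ := by exact_mod_cast hz1
      rw [EReal.toReal_coe]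
      have h1 := ereal_mul_mono hσp ((fconj_le_iff φ π α).1 hα.le (σ⁻¹ • a))
      refine le_trans ?_ h1
      rw [EReal.coe_le_coe_iff]
      have h2 : D b ≤ ((-σ : ℝ) : EReal) := basEnv_le (by rw [hσ]; simp) (by linarith)
      have h3 : smulE (γ * α) D b ≤ ((γ * α * (-σ) : ℝ) : EReal) := by
        unfold smulE
        rw [mul_le_real hγα, mul_div_cancel_left₀ _ hγα.ne']
        exact h2
      have h4 := prox_subgrad hDs y b hDq' h3
      rw [← hq] at h4
      have e1 : (inner ℝ (z - pairHG (x - γ • π) q)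
        (γ⁻¹ • (pairHG x y - pairHG (x - γ • π) q)) : ℝ) =
          inner ℝ (a - (x - γ • π)) π + γ⁻¹ * inner ℝ (b - q) (y - q) := by
        rw [inner_smul_right, WithLp.prod_inner_apply]
        have e2 : (pairHG x y - pairHG (x - γ • π) q : WithLp 2 (H × G)).fst = γ • π := by
          show x - (x - γ • π) = γ • π
          abel
        have e3 : (pairHG x y - pairHG (x - γ • π) q : WithLp 2 (H × G)).snd = y - q := rfl
        have e4 : (z - pairHG (x - γ • π) q : WithLp 2 (H × G)).fst = a - (x - γ • π) := rfl
        have e5 : (z - pairHG (x - γ • π) q : WithLp 2 (H × G)).snd = b - q := rfl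
        simp only [WithLp.ofLp_fst, WithLp.ofLp_snd]
        rw [e2, e3, e4, e5, inner_smul_right]
        field_simp
      rw [e1, inner_sub_left a, inner_smul_left a]
      simp only [conj_trivial]
      have e6 : σ * (σ⁻¹ * inner ℝ a π - α) = inner ℝ a π - α * σ := by
        field_simp
      rw [e6]
      have h5 : γ⁻¹ * inner ℝ (b - q) (y - q) ≤ γ⁻¹ * (γ * α * (-σ)) :=
        mul_le_mul_of_nonneg_left (by linarith) (inv_nonneg.2 hγ.le)
      have e7 : γ⁻¹ * (γ * α * (-σ)) = - (α * σ) := by field_simp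
      linarith
    have hup : persp φ s (pairHG (x - γ • π) q) ≤ ((inner ℝ (x - γ • π) π : ℝ) : EReal) := by
      apply persp_le hφr hs hfq hfb hneg
      intro u hu
      have h1 := hπ3 u (subset_closure hu)
      have e : x - γ • π = γ • (γ⁻¹ • x - π) := by
        rw [smul_sub, smul_smul, mul_inv_cancel₀ hγ.ne', one_smul]
      rw [real_inner_comm]
      rw [real_inner_comm, inner_sub_right] at h1
      rw [e, inner_smul_left, inner_smul_left]
      simp only [conj_trivial]
      exact mul_le_mul_of_nonneg_left (by linarith) hγ.le
    have hval : persp φ s (pairHG (x - γ • π) q) = ((inner ℝ (x - γ • π) π : ℝ) : EReal) := by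
      refine le_antisymm hup ?_
      have := hfin (pairHG (x - γ • π) q)
      rwa [sub_self, inner_zero_left, add_zero] at this
    apply prox_eq (r := γ * inner ℝ (x - γ • π) π)
    · unfold smulE; rw [hval]; norm_cast
    · intro z
      refine le_trans (le_of_eq ?_) (ereal_mul_mono hγ (hfin z))
      rw [inner_smul_right]
      congr 1
      field_simp
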